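/- Let X, Y be real random variables with joint density p_{s,t}(y,z), such that the marginal density p_s of X satisfies p_s(y) ≤ c/√t₀ for all y. Let K_{h,x}(y) = h⁻¹K((y−x)/h) where K is a nonnegative kernel with ∫K = 1, and φ : ℝ² → ℝ measurable with E φ(X,Y)² < ∞. Then ∫ℝ (E[K_{h,x}(X) φ(X,Y)])² dx ≤ (c/√t₀) · E[φ(X,Y)²]. -/

import Mathlib

open MeasureTheory Real Set

lemma helper_cs {Ω : Type*} [MeasurableSpace Ω] (μ : Measure Ω)
    (g f : Ω → ENNReal) (hg : Measurable g) (hf : Measurable f) :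
    (∫⁻ ω, g ω * f ω ∂μ) ^ 2 ≤ (∫⁻ ω, g ω ∂μ) * ∫⁻ ω, g ω * f ω ^ 2 ∂μ := by
  have hs : ∀ a : ENNReal, (a ^ (1 / 2 : ℝ)) ^ 2 = a := fun a => by
    rw [← ENNReal.rpow_natCast, ← ENNReal.rpow_mul]; norm_num
  have key := ENNReal.lintegral_mul_le_Lp_mul_Lq μ (p := 2) (q := 2)
    Real.HolderConjugate.two_two
    (f := fun ω => g ω ^ (1 / 2 : ℝ)) (g := fun ω => g ω ^ (1 / 2 : ℝ) * f ω)
    (by fun_prop) (by fun_prop)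
  have h1 : ∀ ω, ((fun ω => g ω ^ (1 / 2 : ℝ)) * (fun ω => g ω ^ (1 / 2 : ℝ) * f ω)) ω
      = g ω * f ω := fun ω => by
    simp only [Pi.mul_apply]
    rw [← mul_assoc, ← sq, hs]
  simp only [h1, ENNReal.rpow_ofNat, mul_pow, hs] at key
  calc _ ≤ _ := pow_le_pow_left' key 2
    _ = _ := by rw [mul_pow, hs, hs]

lemma helper_main {Ω : Type*} [MeasurableSpace Ω] (μ : Measure Ω) [IsProbabilityMeasure μ]
    (X : Ω → ℝ) (hX : Measurable X) (C : ENNReal)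
    (hd : Measure.map X μ ≤ C • (volume : Measure ℝ))
    (G : ℝ → ENNReal) (hG : Measurable G) (hG1 : ∫⁻ u, G u = 1)
    (f : Ω → ENNReal) (hf : Measurable f) :
    ∫⁻ x : ℝ, (∫⁻ ω, G (X ω - x) * f ω ∂μ) ^ 2 ≤ C * ∫⁻ ω, f ω ^ 2 ∂μ := by
  have h1 : ∀ x : ℝ, ∫⁻ ω, G (X ω - x) ∂μ ≤ C := fun x => by
    calc ∫⁻ ω, G (X ω - x) ∂μ = ∫⁻ y, G (y - x) ∂(Measure.map X μ) := by
          rw [lintegral_map (by fun_prop) hX]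
      _ ≤ ∫⁻ y, G (y - x) ∂(C • (volume : Measure ℝ)) := lintegral_mono' hd le_rfl
      _ = C := by
          rw [lintegral_smul_measure, lintegral_sub_right_eq_self, hG1]; simp
  have hm : Measurable (fun p : ℝ × Ω => G (X p.2 - p.1) * f p.2 ^ 2) := by fun_prop
  calc ∫⁻ x : ℝ, (∫⁻ ω, G (X ω - x) * f ω ∂μ) ^ 2
      ≤ ∫⁻ x : ℝ, C * ∫⁻ ω, G (X ω - x) * f ω ^ 2 ∂μ := by
        refine lintegral_mono fun x => ?_
        exact (helper_cs μ _ f (by fun_prop) hf).trans (mul_le_mul_left (h1 x) _)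
    _ = C * ∫⁻ x : ℝ, ∫⁻ ω, G (X ω - x) * f ω ^ 2 ∂μ := 
        lintegral_const_mul _ hm.lintegral_prod_right'
    _ = C * ∫⁻ ω, (∫⁻ x : ℝ, G (X ω - x) * f ω ^ 2) ∂μ := by
        rw [lintegral_lintegral_swap hm.aemeasurable]
    _ = C * ∫⁻ ω, f ω ^ 2 ∂μ := by
        congr 1
        refine lintegral_congr fun ω => ?_
        rw [lintegral_mul_const _ (by fun_prop), lintegral_sub_left_eq_self, hG1, one_mul]

/-- Lemma 2 (extended Jensen inequality): if the density of `X` is bounded by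
`c/√t₀`, then `∫ₓ (E[K_{h,x}(X) φ(X,Y)])² dx ≤ (c/√t₀) E[φ(X,Y)²]`. -/
theorem stmt_13 {Ω : Type*} [MeasurableSpace Ω] (μ : Measure Ω) [IsProbabilityMeasure μ]
    (X Y : Ω → ℝ) (hX : Measurable X) (hY : Measurable Y)
    (c t₀ : ℝ) (hc : 0 < c) (ht₀ : 0 < t₀)
    (ps : ℝ → ℝ) (hps_nonneg : ∀ y, 0 ≤ ps y)
    (hdens : Measure.map X μ = volume.withDensity fun y => ENNReal.ofReal (ps y))
    (hps_bdd : ∀ y, ps y ≤ c / Real.sqrt t₀)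
    (K : ℝ → ℝ) (hK0 : ∀ z, 0 ≤ K z) (hKint : Integrable K)
    (hKmass : (∫ z : ℝ, K z) = 1) (h : ℝ) (hh : 0 < h)
    (φ : ℝ → ℝ → ℝ) (hφ : Measurable (Function.uncurry φ))
    (hφ2 : Integrable (fun ω => (φ (X ω) (Y ω)) ^ 2) μ) :
    (∫ x : ℝ, (∫ ω, (K ((X ω - x) / h) / h) * φ (X ω) (Y ω) ∂μ) ^ 2)
      ≤ c / Real.sqrt t₀ * ∫ ω, (φ (X ω) (Y ω)) ^ 2 ∂μ := by
  have hC : 0 ≤ c / Real.sqrt t₀ := by positivity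
  set C := c / Real.sqrt t₀ with hCdef
  have hd : Measure.map X μ ≤ ENNReal.ofReal C • (volume : Measure ℝ) := by
    rw [hdens, ← withDensity_const]
    exact withDensity_mono (Filter.Eventually.of_forall
      fun y => ENNReal.ofReal_le_ofReal (hps_bdd y))
  have hac : Measure.map X μ ≪ volume := by
    rw [hdens]; exact withDensity_absolutelyContinuous _ _
  have hKi : Integrable (fun u => K (u / h) / h) := (hKint.comp_div hh.ne').div_const h
  obtain ⟨J, hJm, hJ⟩ := hKi.1
  have hJm := hJm.measurable
  have hG1 : ∫⁻ u, ‖J u‖ₑ = 1 := by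
    rw [← lintegral_congr_ae (hJ.mono fun u hu => by simp only [hu] : 
      (fun u => ‖K (u / h) / h‖ₑ) =ᵐ[volume] fun u => ‖J u‖ₑ),
      ← ofReal_integral_norm_eq_lintegral_enorm hKi]
    have : ∀ u, ‖K (u / h) / h‖ = K (u / h) / h := fun u =>
      Real.norm_of_nonneg (div_nonneg (hK0 _) hh.le)
    simp only [this]
    rw [integral_div, Measure.integral_comp_div K h, hKmass, abs_of_pos hh]
    simp [hh.ne']
  have hφm : Measurable (fun ω => φ (X ω) (Y ω)) := hφ.comp (hX.prodMk hY)
  have main := helper_main μ X hX _ hd (fun u => ‖J u‖ₑ) (by fun_prop) hG1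
    (fun ω => ‖φ (X ω) (Y ω)‖ₑ) (by fun_prop)
  have hrhs : ENNReal.ofReal C * ∫⁻ ω, ‖φ (X ω) (Y ω)‖ₑ ^ 2 ∂μ
      = ENNReal.ofReal (C * ∫ ω, (φ (X ω) (Y ω)) ^ 2 ∂μ) := by
    rw [ENNReal.ofReal_mul hC, ofReal_integral_eq_lintegral_ofReal hφ2
      (Filter.Eventually.of_forall fun _ => sq_nonneg _)]
    congr 1
    refine lintegral_congr fun ω => ?_
    rw [← enorm_pow, Real.enorm_of_nonneg (sq_nonneg _)]
  rw [hrhs] at main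
  have hnn : 0 ≤ C * ∫ ω, (φ (X ω) (Y ω)) ^ 2 ∂μ :=
    mul_nonneg hC (integral_nonneg fun _ => sq_nonneg _)
  rw [← ENNReal.ofReal_le_ofReal_iff hnn]
  refine le_trans ?_ main
  rw [← Real.enorm_of_nonneg (integral_nonneg fun _ => sq_nonneg _)]
  refine (enorm_integral_le_lintegral_enorm _).trans (lintegral_mono fun x => ?_)
  rw [enorm_pow]
  refine pow_le_pow_left' ((enorm_integral_le_lintegral_enorm _).trans (le_of_eq ?_)) 2
  have hJx : ∀ᵐ y, K ((y - x) / h) / h = J (y - x) :=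
    (measurePreserving_sub_right volume x).quasiMeasurePreserving.ae hJ
  have hJω : ∀ᵐ ω ∂μ, K ((X ω - x) / h) / h = J (X ω - x) :=
    ae_of_ae_map hX.aemeasurable (hac.ae_le hJx)
  refine lintegral_congr_ae (hJω.mono fun ω hω => ?_)
  simp only [hω, enorm_mul]
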